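/- arXiv:1702.05655 — 3 statements merged into one kernel-verified Lean document; each statement's English description precedes it below -/
import Mathlib

section
/- Let R be a commutative ring, let a, b be elements of R, and let n, k be natural numbers with n ≤ 2k and k < n. Let A be the n×n matrix over R with entries A i j = b if 0 ≤ j − i < k and A i j = a otherwise. Then det A = (b − a)^(n−1) · (b + a). -/
/-!
Write `A = (b - a) U + a 𝟙 𝟙ᵀ`, where `U` is the `0/1` indicator matrix of the band. It is
upper unitriangular, so `det U = 1`. Every row of `U` has exactly one of the columns `n - 1` and
`n - 1 - k` in its band (here `k < n ≤ 2k` enters), so `U x = 𝟙` for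
`x = e_{n-1} + e_{n-1-k}`. Hence `A = U ((b - a) I + a x 𝟙ᵀ)`, and the determinant of this
rank-one perturbation of a scalar matrix is `(b - a)^(n-1) ((b - a) + a 𝟙ᵀ x)` with `𝟙ᵀ x = 2`.
-/

/-- The matrix determinant lemma for a scalar matrix; it needs no invertibility of `c`, since it
is read off from the characteristic polynomial of the rank-one matrix `-u vᵀ`. -/
lemma det_scalar_add_vecMulVec {R : Type*} [CommRing R] {n : ℕ} (hn : 0 < n) (c : R)
    (u v : Fin n → R) :
    (Matrix.scalar (Fin n) c + Matrix.vecMulVec u v).det = c ^ (n - 1) * (c + v ⬝ᵥ u) := by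
  have h := congrArg (Polynomial.eval c) (Matrix.charpoly_vecMulVec (-u) v)
  rw [Matrix.eval_charpoly, Matrix.neg_vecMulVec, sub_neg_eq_add] at h
  rw [h]
  obtain ⟨m, rfl⟩ : ∃ m, n = m + 1 := ⟨n - 1, by omega⟩
  simp [dotProduct_comm v u]
  ring

/-- Determinant of the generalized binary band matrix with `l = 1` in the case
`n ≤ 2k` and `k < n`: the `n × n` Toeplitz matrix whose `(i,j)` entry is `b` when
`0 ≤ j - i < k` and `a` otherwise has determinant `(b - a)^(n-1) * (b + a)`. -/
theorem det_band_matrix_wide_band {R : Type*} [CommRing R] (a b : R)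
    (n k : ℕ) (hn : n ≤ 2 * k) (hkn : k < n) :
    (Matrix.of fun i j : Fin n =>
        if (0 : ℤ) ≤ (j : ℤ) - (i : ℤ) ∧ (j : ℤ) - (i : ℤ) < (k : ℤ) then b else a).det
      = (b - a) ^ (n - 1) * (b + a) := by
  let U : Matrix (Fin n) (Fin n) R := Matrix.of fun i j =>
    if (0 : ℤ) ≤ (j : ℤ) - (i : ℤ) ∧ (j : ℤ) - (i : ℤ) < (k : ℤ) then 1 else 0
  let p : Fin n := ⟨n - 1, by omega⟩
  let q : Fin n := ⟨n - 1 - k, by omega⟩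
  let x : Fin n → R := Pi.single p 1 + Pi.single q 1
  have hU : U.det = 1 := by
    rw [Matrix.det_of_isUpperTriangular]
    · refine Finset.prod_eq_one fun i _ => ?_
      simp only [U, Matrix.of_apply]
      exact if_pos (by omega)
    · intro i j hij
      have hij' : (j : ℕ) < i := hij
      simp only [U, Matrix.of_apply]
      exact if_neg (by omega)
  have hx : U.mulVec x = 1 := by
    ext i
    have hi := i.isLt
    simp only [x, Matrix.mulVec_add, Matrix.mulVec_single_one, Pi.add_apply, Matrix.col_apply,
      Pi.one_apply, U, Matrix.of_apply, p, q]
    -- Row `i` meets column `n - 1` iff `n - 1 - k < i`, and column `n - 1 - k` otherwise.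
    rcases Nat.lt_or_ge (n - 1 - k) i with h | h
    · rw [if_pos (by omega), if_neg (by omega), add_zero]
    · rw [if_neg (by omega), if_pos (by omega), zero_add]
  have hA : (Matrix.of fun i j : Fin n =>
        if (0 : ℤ) ≤ (j : ℤ) - (i : ℤ) ∧ (j : ℤ) - (i : ℤ) < (k : ℤ) then b else a)
      = U * (Matrix.scalar (Fin n) (b - a) + Matrix.vecMulVec x (fun _ => a)) := by
    rw [mul_add, Matrix.mul_vecMulVec, hx]
    ext i j
    simp only [U, Matrix.of_apply, Matrix.add_apply, Matrix.scalar_apply, Matrix.mul_diagonal,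
      Matrix.vecMulVec_apply, Pi.one_apply]
    split_ifs <;> ring
  rw [hA, Matrix.det_mul, hU, one_mul, det_scalar_add_vecMulVec (by omega)]
  congr 1
  simp only [x, dotProduct_add, dotProduct_single_one]
  ring
end

section
/- Let R be a commutative ring, let a, b be elements of R, and let n, k, l, s be natural numbers with 1 < l ≤ k ≤ n and n = (k + l − 1)·s + 1. Let A be the n×n matrix over R with entries A i j = b if −l < j − i < k (as integers) and A i j = a otherwise. Then det A = (−1)^((k−1)(l−1)s) · (b − a)^(n−1) · (b + s • a). -/
/-!
Write `m = k + l - 1` and `p = k - 1`, so that `n = m * s + 1`, and let `B` be the 0/1 band matrix,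
whose `(i, j)` entry is `1` exactly when `j ≤ i + p < j + m`. Each row of `B` is supported on a window
of `m` consecutive columns, truncated to `[0, m * s]`; it contains exactly one multiple of `m`.
Hence `B x = 𝟙`, where `x` is the indicator vector of the multiples of `m`, and with `c = b - a`
`A = c B + a 𝟙 𝟙ᵀ = B (c I + a x 𝟙ᵀ)`.
The second factor is a rank one perturbation of a scalar matrix, with determinant
`c ^ (n - 1) * (c + (s + 1) a) = c ^ (n - 1) * (b + s a)` (`det_smul_one_add_vecMulVec`).

It remains to see that `det B = (-1) ^ (m * s * p)` (`det_bandMatrix`), by induction on `p` for fixed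
`m` and `s`. For `p = 0` the matrix is lower unitriangular. Passing from `p` to `p + 1` deletes row
`0`, moves the other rows up by one and appends a new last row. This new row is the sum of the old
rows with index `≡ 0` minus the sum of the old rows with index `≡ 1` modulo `m`, so row `0` enters it
with coefficient `1`, and the determinant changes by the sign of a cyclic permutation of
`m * s + 1` rows.
-/

/-- The square 0/1 band matrix of size `m * s + 1` with `p` bands above the diagonal and `m` bands in
total, parametrised so that the `(i, j)` entry depends only on `i + p` and `j`. -/
def bandMatrix (R : Type*) [CommRing R] (m s p : ℕ) :
    Matrix (Fin (m * s + 1)) (Fin (m * s + 1)) R :=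
  Matrix.of fun i j => if (j : ℕ) ≤ i + p ∧ (i : ℕ) + p < j + m then 1 else 0

/-- A window of `m` consecutive integers ending at `y` contains exactly one multiple of `m`. -/
lemma sum_window_zero {R : Type*} [CommRing R] (m s y : ℕ) (hm : 0 < m) (hy : y < m * s + m) :
    ∑ i : Fin (m * s + 1), (if (i : ℕ) % m = 0 then (1 : R) else 0) *
      (if (i : ℕ) ≤ y ∧ y < i + m then 1 else 0) = 1 := by
  have h1 := Nat.div_add_mod y m
  have h2 := Nat.mod_lt y hm
  have h3 : y / m ≤ s := by
    have : y / m < s + 1 := by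
      rw [Nat.div_lt_iff_lt_mul hm]
      linarith [mul_comm m s]
    omega
  have h4 : m * (y / m) ≤ m * s := Nat.mul_le_mul_left m h3
  rw [Finset.sum_eq_single (⟨m * (y / m), by omega⟩ : Fin (m * s + 1))]
  · have : m * (y / m) ≤ y ∧ y < m * (y / m) + m := by omega
    simp [this]
  · intro i _ hi
    by_cases hc : (i : ℕ) % m = 0 ∧ ((i : ℕ) ≤ y ∧ y < i + m)
    · exfalso
      apply hi
      obtain ⟨t, ht⟩ := Nat.dvd_of_mod_eq_zero hc.1
      have : y / m = t := by
        rw [Nat.div_eq_iff hm]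
        have := mul_comm t m
        omega
      ext
      simp [this, ht]
    · by_cases h5 : (i : ℕ) % m = 0
      · have h6 : ¬ ((i : ℕ) ≤ y ∧ y < i + m) := fun h => hc ⟨h5, h⟩
        simp [h6]
      · simp [h5]
  · simp

/-- The analogue of `sum_window_zero` for the residue class of `1`; here the only candidate index
may exceed `m * s`. -/
lemma sum_window_one {R : Type*} [CommRing R] (m s y : ℕ) (hm : 1 < m) :
    ∑ i : Fin (m * s + 1), (if (i : ℕ) % m = 1 then (1 : R) else 0) *
      (if (i : ℕ) ≤ y + 1 ∧ y + 1 < i + m then 1 else 0) = if y < m * s then 1 else 0 := by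
  have h1 := Nat.div_add_mod y m
  have h2 := Nat.mod_lt y (by omega : 0 < m)
  have key : ∀ i : Fin (m * s + 1), (i : ℕ) % m = 1 → (i : ℕ) ≤ y + 1 → y + 1 < i + m →
      (i : ℕ) = m * (y / m) + 1 := by
    intro i h3 h4 h5
    have h6 := Nat.div_add_mod (i : ℕ) m
    have : y / m = (i : ℕ) / m := by
      rw [Nat.div_eq_iff (by omega)]
      have := mul_comm ((i : ℕ) / m) m
      omega
    rw [this]
    omega
  by_cases hy : y < m * s
  · have h3 : y / m < s := by
      rw [Nat.div_lt_iff_lt_mul (by omega)]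
      linarith [mul_comm m s]
    have h4 : m * (y / m + 1) ≤ m * s := Nat.mul_le_mul_left m h3
    rw [mul_add] at h4
    rw [Finset.sum_eq_single (⟨m * (y / m) + 1, by omega⟩ : Fin (m * s + 1)), if_pos hy]
    · have h5 : m * (y / m) ≤ y ∧ y + 1 < m * (y / m) + 1 + m := by omega
      simp [h5, Nat.add_mod, Nat.mod_eq_of_lt hm]
    · intro i _ hi
      by_cases h5 : (i : ℕ) % m = 1
      · have h6 : ¬ ((i : ℕ) ≤ y + 1 ∧ y + 1 < i + m) := fun h =>
          hi (Fin.ext (key i h5 h.1 h.2))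
        simp [h6]
      · simp [h5]
    · simp
  · rw [if_neg hy]
    apply Finset.sum_eq_zero
    intro i _
    by_cases h5 : (i : ℕ) % m = 1
    · have h6 : ¬ ((i : ℕ) ≤ y + 1 ∧ y + 1 < i + m) := fun h => by
        have h7 := key i h5 h.1 h.2
        have h8 := i.2
        have h9 : s ≤ y / m := by
          rw [Nat.le_div_iff_mul_le (by omega)]
          linarith [mul_comm m s]
        have h10 : m * s ≤ m * (y / m) := Nat.mul_le_mul_left m h9
        omega
      simp [h6]
    · simp [h5]

/-- The inductive step: `bandMatrix R m s (p + 1)` arises from `bandMatrix R m s p` by replacing row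
`0` with a combination of rows in which row `0` has coefficient `1`, and rotating the rows. -/
lemma det_bandMatrix_succ {R : Type*} [CommRing R] (m s p : ℕ) (hp : p + 1 < m) :
    (bandMatrix R m s (p + 1)).det = (-1) ^ (m * s) * (bandMatrix R m s p).det := by
  set c : Fin (m * s + 1) → R := fun i =>
    (if (i : ℕ) % m = 0 then (1 : R) else 0) - (if (i : ℕ) % m = 1 then (1 : R) else 0) with hc
  have h0 : c 0 = 1 := by simp [hc]
  have hrow : ∀ j : Fin (m * s + 1), (∑ i, c i • bandMatrix R m s p i) j
      = if (j : ℕ) ≤ m * s + (p + 1) ∧ m * s + (p + 1) < j + m then 1 else 0 := by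
    intro j
    have hj := j.2
    obtain ⟨y, hy⟩ : ∃ y, (j : ℕ) + m = y + 1 + 1 + p := ⟨j + m - 2 - p, by omega⟩
    have hent : ∀ i : Fin (m * s + 1), bandMatrix R m s p i j
        = if (i : ℕ) ≤ y + 1 ∧ y + 1 < i + m then 1 else 0 := by
      intro i
      simp only [bandMatrix, Matrix.of_apply]
      congr 1
      apply propext
      omega
    simp only [Finset.sum_apply, Pi.smul_apply, smul_eq_mul, hent, hc, sub_mul,
      Finset.sum_sub_distrib]
    rw [sum_window_zero m s (y + 1) (by omega) (by omega), sum_window_one m s y (by omega)]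
    by_cases h : y < m * s
    · rw [if_pos h, if_neg (by omega), sub_self]
    · rw [if_neg h, if_pos (by omega), sub_zero]
  have hmat : bandMatrix R m s (p + 1) = ((bandMatrix R m s p).updateRow 0
      (∑ i, c i • bandMatrix R m s p i)).submatrix (finRotate (m * s + 1)) id := by
    ext i j
    rw [Matrix.submatrix_apply, id]
    induction i using Fin.lastCases with
    | last =>
      rw [finRotate_last, Matrix.updateRow_self, hrow]
      simp [bandMatrix]
    | cast i =>
      have hi : finRotate (m * s + 1) i.castSucc = i.succ := finRotate_of_lt i.2
      rw [hi, Matrix.updateRow_ne (Fin.succ_ne_zero i)]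
      simp only [bandMatrix, Matrix.of_apply, Fin.val_castSucc, Fin.val_succ]
      congr 1
      apply propext
      omega
  rw [hmat, Matrix.det_permute, Matrix.det_updateRow_sum, h0, one_smul, sign_finRotate]
  simp

lemma det_bandMatrix {R : Type*} [CommRing R] (m s p : ℕ) (hp : p < m) :
    (bandMatrix R m s p).det = (-1) ^ (m * s * p) := by
  induction p with
  | zero =>
    rw [Matrix.det_of_isLowerTriangular]
    · simp [bandMatrix, hp]
    · intro i j hij
      have : (i : ℕ) < j := hij
      simp only [bandMatrix, Matrix.of_apply]
      rw [if_neg (by omega)]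
  | succ p ih =>
    rw [det_bandMatrix_succ m s p hp, ih (by omega), ← pow_add]
    congr 1
    ring

lemma det_smul_one_add_vecMulVec {R : Type*} [CommRing R] {N : ℕ} (c : R)
    (u v : Fin (N + 1) → R) :
    (c • (1 : Matrix (Fin (N + 1)) (Fin (N + 1)) R) + Matrix.vecMulVec u v).det
      = c ^ N * (c + u ⬝ᵥ v) := by
  have h := Matrix.eval_charpoly (Matrix.vecMulVec (-u) v) c
  rw [Matrix.charpoly_vecMulVec] at h
  have h2 : c • (1 : Matrix (Fin (N + 1)) (Fin (N + 1)) R) + Matrix.vecMulVec u v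
      = Matrix.scalar _ c - Matrix.vecMulVec (-u) v := by
    rw [Matrix.neg_vecMulVec, sub_neg_eq_add, Matrix.smul_one_eq_diagonal]
    rfl
  rw [h2, ← h]
  simp
  ring

lemma sum_multiples {R : Type*} [CommRing R] (m s : ℕ) (hm : 0 < m) :
    ∑ i : Fin (m * s + 1), (if (i : ℕ) % m = 0 then (1 : R) else 0) = s + 1 := by
  rw [Fin.sum_univ_eq_sum_range (fun i => if i % m = 0 then (1 : R) else 0),
    Finset.sum_range_succ', Finset.sum_boole]
  simp only [← Nat.dvd_iff_mod_eq_zero]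
  rw [Nat.card_multiples, Nat.mul_div_cancel_left s hm]
  simp

/-- Determinant of the `n × n` generalized binary band matrix with parameters
`1 < l ≤ k ≤ n` (entry `b` when `-l < j - i < k`, entry `a` otherwise) in the case
`n = (k + l - 1) * s + 1`. -/
theorem det_band_matrix_case_p_eq_one {R : Type*} [CommRing R] (a b : R)
    (n k l s : ℕ) (hl : 1 < l) (hlk : l ≤ k) (hkn : k ≤ n)
    (hn : n = (k + l - 1) * s + 1) :
    (Matrix.of fun i j : Fin n =>
        if -(l : ℤ) < (j : ℤ) - (i : ℤ) ∧ (j : ℤ) - (i : ℤ) < (k : ℤ) then b else a).det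
      = (-1 : R) ^ ((k - 1) * (l - 1) * s) * (b - a) ^ (n - 1) * (b + s • a) := by
  subst hn
  obtain ⟨p, rfl⟩ : ∃ p, k = p + 1 := ⟨k - 1, by omega⟩
  obtain ⟨q, rfl⟩ : ∃ q, l = q + 1 := ⟨l - 1, by omega⟩
  obtain ⟨m, hm⟩ : ∃ m, m = p + 1 + (q + 1) - 1 := ⟨_, rfl⟩
  rw [← hm]
  set x : Fin (m * s + 1) → R := fun i => if (i : ℕ) % m = 0 then 1 else 0 with hx
  have hfac : (Matrix.of fun i j : Fin (m * s + 1) =>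
        if -((q + 1 : ℕ) : ℤ) < (j : ℤ) - (i : ℤ) ∧ (j : ℤ) - (i : ℤ) < ((p + 1 : ℕ) : ℤ)
          then b else a)
      = bandMatrix R m s p * ((b - a) • 1 + Matrix.vecMulVec x (fun _ => a)) := by
    have hBx : (bandMatrix R m s p).mulVec x = fun _ => 1 := by
      funext i
      have hi := i.2
      rw [← sum_window_zero (R := R) m s (i + p) (by omega) (by omega)]
      simp only [Matrix.mulVec, dotProduct, bandMatrix, Matrix.of_apply, hx]
      exact Finset.sum_congr rfl fun j _ => mul_comm _ _
    rw [mul_add, Matrix.mul_vecMulVec, hBx]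
    ext i j
    simp only [Matrix.mul_smul, mul_one, Matrix.add_apply, Matrix.smul_apply,
      Matrix.vecMulVec_apply, bandMatrix, Matrix.of_apply, smul_eq_mul, one_mul]
    by_cases h : (j : ℕ) ≤ i + p ∧ (i : ℕ) + p < j + m
    · rw [if_pos h, if_pos (by omega)]
      ring
    · rw [if_neg h, if_neg (by omega)]
      ring
  have hdot : x ⬝ᵥ (fun _ => a) = (s + 1) * a := by
    simp only [dotProduct, ← Finset.sum_mul, hx]
    rw [sum_multiples m s (by omega)]
  rw [hfac, Matrix.det_mul, det_bandMatrix m s p (by omega), det_smul_one_add_vecMulVec, hdot]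
  -- `m * p = p * q + p * (p + 1)`, and the second summand is even.
  have hsign : (-1 : R) ^ (m * s * p) = (-1) ^ (p * q * s) := by
    have hm' : m = p + q + 1 := by omega
    obtain ⟨t, ht⟩ := Nat.even_mul_succ_self p
    have : m * s * p = p * q * s + 2 * (t * s) := by
      calc m * s * p = p * q * s + p * (p + 1) * s := by rw [hm']; ring
        _ = _ := by rw [ht]; ring
    rw [this, pow_add, pow_mul (-1 : R) 2]
    simp
  rw [hsign]
  simp only [Nat.add_sub_cancel, nsmul_eq_mul]
  ring
end

section
/- Let n ≥ 1 be a natural number. Then the sum of the signs of all permutations σ of Fin n satisfying |σ i − i| > 1 for every i equals (3 − n)/3 if n ≡ 0 (mod 3), equals (n − 1)/3 if n ≡ 1 (mod 3), and equals 0 if n ≡ 2 (mod 3). Equivalently, these values give the number of even such permutations minus the number of odd such permutations. -/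
/-!
The signed count is the determinant of the 0/1 matrix with entry `1` exactly where `|i - j| > 1`,
that is of `J - T`, where `J` is the all-ones matrix and `T` (`triOnes`) is the tridiagonal
matrix of ones.

Laplace expansion gives `det T_{n+2} = det T_{n+1} - det T_n`, hence `det T_{n+3} = -det T_n`, so
`det T` is `(-1)^k`, `(-1)^k`, `0` for `n = 3k`, `3k+1`, `3k+2`.

If `n = 3k` or `n = 3k+1`, a 0/1 vector `v` supported on one residue class modulo 3 satisfies
`T v = 1`; then `J - T = -T (1 - v 1ᵀ)` and the matrix determinant lemma gives
`det (J - T) = (-1)^n det T (1 - ∑ v)`, where `∑ v` is `k` or `k + 1` respectively.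
If `n = 3k+2`, the vector `(1, -1, 0, 1, -1, 0, …, 1, -1)` is killed by both `J` and `T`, so
`det (J - T) = 0`.
-/

/-- The `n × n` tridiagonal matrix all of whose entries with `|i - j| ≤ 1` are `1`. -/
def triOnes (n : ℕ) : Matrix (Fin n) (Fin n) ℤ :=
  Matrix.of fun i j => if (i : ℕ) ≤ j + 1 ∧ (j : ℕ) ≤ i + 1 then 1 else 0

theorem det_triOnes_add_two (n : ℕ) :
    (triOnes (n + 2)).det = (triOnes (n + 1)).det - (triOnes n).det := by
  have minor_zero : (triOnes (n + 2)).submatrix Fin.succ (Fin.succAbove 0) = triOnes (n + 1) := by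
    ext i j
    simp [triOnes]
  have minor_one : ((triOnes (n + 2)).submatrix Fin.succ (Fin.succAbove 1)).det
      = (triOnes n).det := by
    -- The first column of this minor is `(1, 0, …, 0)`.
    rw [Matrix.det_succ_column_zero, Fin.sum_univ_succ, Finset.sum_eq_zero]
    · have : (((triOnes (n + 2)).submatrix Fin.succ (Fin.succAbove 1)).submatrix
          (Fin.succAbove 0) Fin.succ) = triOnes n := by
        ext i j
        have h : (Fin.succAbove (1 : Fin (n + 2)) j.succ) = j.succ.succ := by
          rw [← Fin.succ_zero_eq_one, Fin.succ_succAbove_succ, Fin.succAbove_zero]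
        simp [triOnes, h]
      rw [this]
      simp [triOnes]
    · intro i _
      simp [triOnes]
  rw [Matrix.det_succ_row_zero, Fin.sum_univ_succ, Fin.sum_univ_succ, Finset.sum_eq_zero]
  · rw [minor_zero, Fin.succ_zero_eq_one, minor_one]
    simp [triOnes]
    ring
  · intro i _
    simp [triOnes]

theorem det_triOnes (k : ℕ) :
    (triOnes (3 * k)).det = (-1) ^ k ∧ (triOnes (3 * k + 1)).det = (-1) ^ k := by
  induction k with
  | zero => simp [triOnes]
  | succ k ih =>
    have h2 := det_triOnes_add_two (3 * k)
    have h3 := det_triOnes_add_two (3 * k + 1)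
    have h4 := det_triOnes_add_two (3 * k + 2)
    rw [show 3 * k + 1 + 2 = 3 * k + 3 by rfl, show 3 * k + 1 + 1 = 3 * k + 2 by rfl] at h3
    rw [show 3 * k + 2 + 2 = 3 * k + 4 by rfl, show 3 * k + 2 + 1 = 3 * k + 3 by rfl] at h4
    rw [ih.1, ih.2] at h2
    rw [ih.2, h2] at h3
    rw [h3, h2] at h4
    rw [Nat.mul_add]
    refine ⟨?_, ?_⟩
    · rw [h3]; ring
    · rw [Nat.add_assoc, h4]; ring

/-- A row of `triOnes n` applied to a vector given by a function on `ℕ`. -/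
theorem triOnes_mulVec (n : ℕ) (f : ℕ → ℤ) (i : Fin n) :
    (triOnes n).mulVec (fun j => f j) i
      = f i + (if (i : ℕ) + 1 < n then f (i + 1) else 0)
        + (if 0 < (i : ℕ) then f (i - 1) else 0) := by
  have hi := i.2
  have split_entry : ∀ j : ℕ, (if (i : ℕ) ≤ j + 1 ∧ j ≤ i + 1 then (1 : ℤ) else 0) * f j
      = (if (i : ℕ) = j then f j else 0) + (if (i : ℕ) + 1 = j then f j else 0)
        + (if (i : ℕ) - 1 = j then (if 0 < (i : ℕ) then f j else 0) else 0) := by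
    intro j
    split_ifs <;> omega
  have : (triOnes n).mulVec (fun j => f j) i
      = ∑ j ∈ Finset.range n, (if (i : ℕ) ≤ j + 1 ∧ j ≤ i + 1 then (1 : ℤ) else 0) * f j := by
    rw [Finset.sum_range]
    simp [Matrix.mulVec, dotProduct, triOnes]
  rw [this, Finset.sum_congr rfl fun j _ => split_entry j, Finset.sum_add_distrib,
    Finset.sum_add_distrib, Finset.sum_ite_eq, Finset.sum_ite_eq, Finset.sum_ite_eq]
  simp only [Finset.mem_range, hi, if_true, show (i : ℕ) - 1 < n by omega]

/-- The matrix determinant lemma for `J - T`, given a solution `v` of `T v = 1`. -/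
theorem det_ones_sub_triOnes (n : ℕ) (v : Fin n → ℤ) (hv : (triOnes n).mulVec v = 1) :
    (Matrix.of (fun _ _ => 1) - triOnes n).det
      = (-1) ^ n * (triOnes n).det * (1 - ∑ i, v i) := by
  have factor : Matrix.of (fun _ _ => 1) - triOnes n
      = -(triOnes n *
          (1 + Matrix.replicateCol Unit (-v) * Matrix.replicateRow Unit (1 : Fin n → ℤ))) := by
    ext i j
    have hi := congrFun hv i
    simp only [Matrix.mulVec, dotProduct, Pi.one_apply] at hi
    simp [Matrix.mul_add, Matrix.mul_apply, hi]
    ring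
  rw [factor, Matrix.det_neg, Matrix.det_mul, Matrix.det_one_add_replicateCol_mul_replicateRow]
  simp [dotProduct]
  ring

theorem sum_sign_eq_det (n : ℕ) :
    ∑ σ ∈ Finset.univ.filter (fun σ : Equiv.Perm (Fin n) =>
        ∀ i : Fin n, 1 < |((σ i : ℕ) : ℤ) - ((i : ℕ) : ℤ)|),
        ((Equiv.Perm.sign σ : ℤˣ) : ℤ)
      = (Matrix.of (fun _ _ => 1) - triOnes n).det := by
  have entry : Matrix.of (fun _ _ => 1) - triOnes n = Matrix.of fun i j : Fin n =>
      if 1 < |((i : ℕ) : ℤ) - ((j : ℕ) : ℤ)| then (1 : ℤ) else 0 := by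
    ext i j
    simp only [triOnes, Matrix.sub_apply, Matrix.of_apply, lt_abs]
    split_ifs <;> omega
  rw [entry, Matrix.det_apply, Finset.sum_filter]
  refine Finset.sum_congr rfl fun σ _ => ?_
  simp only [Matrix.of_apply, Finset.prod_boole, Finset.mem_univ, true_imp_iff]
  split_ifs <;> simp [Units.smul_def]

theorem sum_mod_three_eq_one (k : ℕ) :
    ∑ i ∈ Finset.range (3 * k), (if i % 3 = 1 then (1 : ℤ) else 0) = k := by
  induction k with
  | zero => simp
  | succ k ih =>
    rw [Nat.mul_add, Finset.sum_range_succ, Finset.sum_range_succ, Finset.sum_range_succ, ih]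
    simp [Nat.add_mod]

theorem sum_mod_three_eq_zero (k : ℕ) :
    ∑ i ∈ Finset.range (3 * k + 1), (if i % 3 = 0 then (1 : ℤ) else 0) = k + 1 := by
  induction k with
  | zero => rfl
  | succ k ih =>
    rw [show 3 * (k + 1) + 1 = 3 * k + 1 + 3 by ring, Finset.sum_range_succ,
      Finset.sum_range_succ, Finset.sum_range_succ, ih]
    simp [Nat.add_mod]

theorem sum_kernel_vector (k : ℕ) :
    ∑ i ∈ Finset.range (3 * k + 2),
      (if i % 3 = 0 then (1 : ℤ) else if i % 3 = 1 then -1 else 0) = 0 := by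
  induction k with
  | zero => simp [Finset.sum_range_succ]
  | succ k ih =>
    rw [show 3 * (k + 1) + 2 = 3 * k + 2 + 3 by ring, Finset.sum_range_succ,
      Finset.sum_range_succ, Finset.sum_range_succ, ih]
    simp [Nat.add_mod]

/-- The sum of the signs of all permutations `σ` of `Fin n` with `|σ i - i| > 1` for all
`i` equals `(3 - n)/3` if `n ≡ 0 (mod 3)`, `(n - 1)/3` if `n ≡ 1 (mod 3)`, and `0` if
`n ≡ 2 (mod 3)`. -/
theorem sum_sign_menage_rectangular_perms (n : ℕ) (hn : 1 ≤ n) :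
    ∑ σ ∈ Finset.univ.filter (fun σ : Equiv.Perm (Fin n) =>
        ∀ i : Fin n, 1 < |((σ i : ℕ) : ℤ) - ((i : ℕ) : ℤ)|),
        ((Equiv.Perm.sign σ : ℤˣ) : ℤ)
      = if n % 3 = 0 then (3 - (n : ℤ)) / 3
        else if n % 3 = 1 then ((n : ℤ) - 1) / 3
        else 0 := by
  rw [sum_sign_eq_det]
  have sq_sign : ∀ k : ℕ, ((-1 : ℤ) ^ k) * (-1) ^ k = 1 := fun k => by
    rw [← mul_pow]; simp
  have cube_sign : ∀ k : ℕ, (-1 : ℤ) ^ (3 * k) = (-1) ^ k := fun k => by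
    rw [pow_mul]; norm_num
  obtain ⟨k, rfl | rfl | rfl⟩ : ∃ k, n = 3 * k ∨ n = 3 * k + 1 ∨ n = 3 * k + 2 :=
    ⟨n / 3, by omega⟩
  · rw [det_ones_sub_triOnes _ (fun i => if (i : ℕ) % 3 = 1 then 1 else 0), (det_triOnes k).1,
      ← Finset.sum_range (fun i => if i % 3 = 1 then (1 : ℤ) else 0), sum_mod_three_eq_one,
      cube_sign, sq_sign, if_pos (by omega)]
    · push_cast; omega
    · ext i
      have hi := i.2
      rw [triOnes_mulVec _ (fun i => if i % 3 = 1 then 1 else 0), Pi.one_apply]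
      split_ifs <;> omega
  · rw [det_ones_sub_triOnes _ (fun i => if (i : ℕ) % 3 = 0 then 1 else 0), (det_triOnes k).2,
      ← Finset.sum_range (fun i => if i % 3 = 0 then (1 : ℤ) else 0), sum_mod_three_eq_zero,
      pow_succ, cube_sign, mul_right_comm ((-1) ^ k) (-1), sq_sign, if_neg (by omega), if_pos (by omega)]
    · push_cast; omega
    · ext i
      have hi := i.2
      rw [triOnes_mulVec _ (fun i => if i % 3 = 0 then 1 else 0), Pi.one_apply]
      split_ifs <;> omega
  · rw [if_neg (by omega), if_neg (by omega)]
    refine Matrix.exists_mulVec_eq_zero_iff.mp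
      ⟨fun i => if (i : ℕ) % 3 = 0 then 1 else if (i : ℕ) % 3 = 1 then -1 else 0, ?_, ?_⟩
    · intro h
      simpa using congrFun h 0
    · ext i
      have hi := i.2
      rw [Matrix.sub_mulVec, Pi.sub_apply,
        triOnes_mulVec _ (fun i => if i % 3 = 0 then 1 else if i % 3 = 1 then -1 else 0)]
      simp only [Matrix.mulVec, dotProduct, Matrix.of_apply, one_mul, Pi.zero_apply]
      rw [← Finset.sum_range (fun i => if i % 3 = 0 then (1 : ℤ) else if i % 3 = 1 then -1 else 0),
        sum_kernel_vector]
      split_ifs <;> omega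
end
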